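/- arXiv:2402.00716 — 3 statements merged into one kernel-verified Lean document; each statement's English description precedes it below -/
import Mathlib

section
/- Let X be a type and deg : X → ℕ a function with deg x ≥ 1 for all x ∈ X, such that for every n the set {x ∈ X : deg x = n} is finite. For n ∈ ℕ, the set of finite multisets s over X with ∑_{x∈s} deg x = n (summed with multiplicity) is finite, and so is the set of finite subsets S ⊆ X with ∑_{x∈S} deg x = n; let m_n and s_n denote their respective cardinalities. Then for every n ∈ ℕ, m_n = ∑_{j : 2j ≤ n} s_{n-2j} · m_j. -/
/-!
Every multiset `s` is `S + 2 • t` for a unique finite set `S` and a unique multiset `t`: an element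
lies in `S` when its multiplicity in `s` is odd, and its multiplicity in `t` is half of that in `s`,
rounded down. As `deg s = deg S + 2 * deg t`, sorting the multisets of degree `n` by `j = deg t`
gives the recursion, already as an identity of cardinalities in `ℕ∞`. The cardinalities are finite
because a multiset of degree `n` has at most `n` elements, each of degree at most `n`.
-/

section Decomposition

variable {α : Type*}

theorem val_add_two_nsmul_injective :
    Function.Injective fun p : Finset α × Multiset α => p.1.val + 2 • p.2 := by
  classical
  rintro ⟨S, t⟩ ⟨S', t'⟩ h
  have count_eq (x : α) : S.val.count x + 2 * t.count x = S'.val.count x + 2 * t'.count x := by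
    simpa using congrArg (Multiset.count x) h
  have count_le_one (T : Finset α) (x : α) : T.val.count x ≤ 1 :=
    Multiset.nodup_iff_count_le_one.1 T.nodup x
  have hS : S = S' := Finset.val_injective <| Multiset.ext.2 fun x => by
    have := count_eq x
    have := count_le_one S x
    have := count_le_one S' x
    omega
  subst hS
  have ht : t = t' := Multiset.ext.2 fun x => by
    have := count_eq x
    omega
  rw [ht]

theorem val_add_two_nsmul_surjective :
    Function.Surjective fun p : Finset α × Multiset α => p.1.val + 2 • p.2 := by
  classical
  intro s
  induction s using Multiset.induction_on with
  | empty => exact ⟨(∅, 0), by simp⟩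
  | cons a s ih =>
    obtain ⟨⟨S, t⟩, rfl⟩ := ih
    by_cases ha : a ∈ S
    · -- The new copy of `a` pairs up with the one in `S`, and the pair moves to `2 • t`.
      have hS : a ::ₘ (S.erase a).val = S.val := by
        rw [Finset.erase_val, Multiset.cons_erase ha]
      refine ⟨(S.erase a, a ::ₘ t), ?_⟩
      simp only [← hS, two_nsmul, Multiset.cons_add, Multiset.add_cons]
    · exact ⟨(insert a S, t), by
        simp only [Finset.insert_val_of_notMem ha, Multiset.cons_add]⟩

theorem val_add_two_nsmul_bijective :
    Function.Bijective fun p : Finset α × Multiset α => p.1.val + 2 • p.2 :=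
  ⟨val_add_two_nsmul_injective, val_add_two_nsmul_surjective⟩

end Decomposition

section Counting

variable {α β : Type*}

theorem setOf_add_mul_eq_biUnion_prod (f : α → ℕ) (g : β → ℕ) {k : ℕ} (hk : 0 < k) (n : ℕ) :
    {p : α × β | f p.1 + k * g p.2 = n} =
      ⋃ j ∈ Finset.range (n / k + 1), {a | f a = n - k * j} ×ˢ {b | g b = j} := by
  ext ⟨a, b⟩
  have hle : g b < n / k + 1 ↔ k * g b ≤ n := by
    rw [Nat.lt_succ_iff, Nat.le_div_iff_mul_le hk, mul_comm]
  simp only [Set.mem_iUnion, Set.mem_prod, Set.mem_ofPred_eq, Finset.mem_range, exists_prop,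
    exists_eq_right_right', hle]
  omega

theorem encard_setOf_add_mul_eq (f : α → ℕ) (g : β → ℕ) {k : ℕ} (hk : 0 < k) (n : ℕ) :
    {p : α × β | f p.1 + k * g p.2 = n}.encard =
      ∑ j ∈ Finset.range (n / k + 1), {a | f a = n - k * j}.encard * {b | g b = j}.encard := by
  have hdisj : (Finset.range (n / k + 1) : Set ℕ).PairwiseDisjoint
      fun j => {a | f a = n - k * j} ×ˢ {b | g b = j} := fun i _ j _ hij =>
    Set.disjoint_left.2 fun _ hi hj => hij (hi.2.symm.trans hj.2)
  rw [setOf_add_mul_eq_biUnion_prod f g hk, ← Finset.set_biUnion_coe,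
    (Finset.finite_toSet _).encard_biUnion hdisj, finsum_mem_coe_finset]
  simp only [Set.encard_prod]

theorem encard_setOf_sum_map_eq (deg : α → ℕ) (n : ℕ) :
    {s : Multiset α | (s.map deg).sum = n}.encard =
      ∑ j ∈ Finset.range (n / 2 + 1),
        {S : Finset α | ∑ x ∈ S, deg x = n - 2 * j}.encard *
          {s : Multiset α | (s.map deg).sum = j}.encard := by
  rw [← encard_setOf_add_mul_eq _ _ two_pos,
    ← Set.encard_preimage_of_bijective val_add_two_nsmul_bijective]
  simp only [Set.preimage_ofPred_eq, Multiset.map_add, Multiset.map_nsmul, Multiset.sum_add,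
    Multiset.sum_nsmul, smul_eq_mul, Finset.sum_map_val]

end Counting

section Finiteness

variable {α : Type*}

theorem finite_setOf_card_le_forall_mem {F : Set α} (hF : F.Finite) (n : ℕ) :
    {s : Multiset α | s.card ≤ n ∧ ∀ x ∈ s, x ∈ F}.Finite := by
  classical
  refine (Set.finite_Iic (n • hF.toFinset.val)).subset fun s ⟨hcard, hsF⟩ => ?_
  refine Multiset.le_iff_count.2 fun x => ?_
  by_cases hx : x ∈ s
  · have hcount : hF.toFinset.val.count x = 1 :=
      Multiset.count_eq_one_of_mem hF.toFinset.nodup (hF.mem_toFinset.2 (hsF x hx))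
    rw [Multiset.count_nsmul, hcount, mul_one]
    exact (Multiset.count_le_card x s).trans hcard
  · rw [Multiset.count_eq_zero_of_notMem hx]
    exact Nat.zero_le _

theorem finite_setOf_sum_map_eq {deg : α → ℕ} (hdeg : ∀ x, 1 ≤ deg x) {n : ℕ}
    (hfin : {x | deg x ≤ n}.Finite) : {s : Multiset α | (s.map deg).sum = n}.Finite := by
  refine (finite_setOf_card_le_forall_mem hfin n).subset ?_
  rintro s rfl
  have one_le : ∀ d ∈ s.map deg, 1 ≤ d := Multiset.forall_mem_map_iff.2 fun x _ => hdeg x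
  have hcard : s.card ≤ (s.map deg).sum := by
    simpa using Multiset.card_nsmul_le_sum one_le
  exact ⟨hcard, fun x hx => Multiset.le_sum_of_mem (Multiset.mem_map_of_mem deg hx)⟩

end Finiteness

/-- Combinatorial form of `∏_x (1+T^{deg x}) = ∏_x (1-T^{2·deg x})/(1-T^{deg x})`:
if every element of `X` has degree `≥ 1` and there are finitely many elements of each
degree, then the multisets of total degree `n` and the subsets of total degree `n` form
finite sets, and their counts `m_n`, `s_n` satisfy `m_n = ∑_{2j ≤ n} s_{n-2j}·m_j`. -/
theorem squarefree_divisor_count (X : Type*) (deg : X → ℕ)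
    (hdeg : ∀ x : X, 1 ≤ deg x)
    (hfin : ∀ n : ℕ, {x : X | deg x = n}.Finite) :
    (∀ n : ℕ, {s : Multiset X | (s.map deg).sum = n}.Finite) ∧
    (∀ n : ℕ, {S : Finset X | ∑ x ∈ S, deg x = n}.Finite) ∧
    (∀ n : ℕ,
      {s : Multiset X | (s.map deg).sum = n}.ncard =
        ∑ j ∈ Finset.range (n / 2 + 1),
          {S : Finset X | ∑ x ∈ S, deg x = n - 2 * j}.ncard *
            {s : Multiset X | (s.map deg).sum = j}.ncard) := by
  have hle (n : ℕ) : {x | deg x ≤ n}.Finite :=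
    Set.Finite.preimage' (Set.finite_Iic n) fun k _ => hfin k
  have hM (n : ℕ) : {s : Multiset X | (s.map deg).sum = n}.Finite :=
    finite_setOf_sum_map_eq hdeg (hle n)
  have hS (n : ℕ) : {S : Finset X | ∑ x ∈ S, deg x = n}.Finite :=
    (hM n).preimage Finset.val_injective.injOn
  refine ⟨hM, hS, fun n => Nat.cast_injective (R := ℕ∞) ?_⟩
  simpa only [Nat.cast_sum, Nat.cast_mul, (hM _).cast_ncard_eq, (hS _).cast_ncard_eq]
    using encard_setOf_sum_map_eq deg n
end

section
/- Let F be a finite field with q = #F elements. Then the number of tuples (a₁, a₂, a₃, a₄, a₆) ∈ F⁵ such that the Weierstrass curve y² + a₁xy + a₃y = x³ + a₂x² + a₄x + a₆ has nonzero discriminant Δ equals q⁵ - q⁴. -/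
/-!
The point is to count the singular equations, of which there are exactly `q⁴`. Two singular points
of a Weierstrass cubic would span a line meeting it with multiplicity at least `4 > 3`, so there is
at most one. Over a perfect field a cubic with `Δ = 0` has a rational singular point: away from
characteristic `2` it comes from a multiple root of the 2-torsion polynomial, and in
characteristic `2` from solving the equations of the singular locus, extracting square roots when
`a₁ = 0`. Conversely, once `a₁`, `a₂` and the singular point `(x, y)` are prescribed, the two
partial derivatives and the equation determine `a₃`, `a₄`, `a₆`. So singular equations
correspond bijectively to quadruples `(a₁, a₂, x, y)`.
-/

section CubicPolynomials

open Polynomial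

variable {F : Type*} [Field F]

theorem separable_toPoly_iff_discr_ne_zero {P : Cubic F} (ha : P.a ≠ 0) :
    P.toPoly.Separable ↔ P.discr ≠ 0 := by
  have hsplits : (P.toPoly.map (algebraMap F (AlgebraicClosure F))).Splits := IsAlgClosed.splits _
  rw [Cubic.discr_ne_zero_iff_roots_nodup ha hsplits, Cubic.map_roots]
  exact (nodup_aroots_iff_of_splits (Cubic.ne_zero_of_a_ne_zero ha) hsplits).symm

theorem exists_isRoot_and_isRoot_derivative_of_not_separable [PerfectField F] {f : F[X]}
    (hdeg : f.natDegree ≤ 3) (hf : ¬ f.Separable) :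
    ∃ x, f.IsRoot x ∧ (derivative f).IsRoot x := by
  rcases eq_or_ne f 0 with rfl | hf0
  · exact ⟨0, by simp⟩
  obtain ⟨g, ⟨h, rfl⟩, hg⟩ : ∃ g, g * g ∣ f ∧ ¬ IsUnit g := by
    simpa [PerfectField.separable_iff_squarefree, Squarefree] using hf
  have hg0 : g ≠ 0 := left_ne_zero_of_mul (left_ne_zero_of_mul hf0)
  have hh0 : h ≠ 0 := right_ne_zero_of_mul hf0
  have hg_pos : 0 < g.natDegree :=
    natDegree_pos_iff_degree_pos.mpr (degree_pos_of_ne_zero_of_nonunit hg0 hg)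
  rw [natDegree_mul (mul_ne_zero hg0 hg0) hh0, natDegree_mul hg0 hg0] at hdeg
  obtain ⟨x, hx⟩ := exists_root_of_degree_eq_one
    ((degree_eq_iff_natDegree_eq hg0).mpr (by omega : g.natDegree = 1))
  exact ⟨x, by simp [hx.eq_zero], by simp [hx.eq_zero]⟩

end CubicPolynomials

section SingularPoint

variable {R : Type*} [CommRing R]

/-- The affine point `(x, y)` is a singular point of the Weierstrass curve `W`: it lies on `W`, and
both partial derivatives of the Weierstrass equation vanish there. The derivative conditions are
encoded as the failure of Mathlib's `WeierstrassCurve.Affine.Nonsingular`. -/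
def IsSingularPoint (W : WeierstrassCurve R) (x y : R) : Prop :=
  W.toAffine.Equation x y ∧ ¬ W.toAffine.Nonsingular x y

/-- The Weierstrass curve with prescribed `a₁`, `a₂` and singular point `(x, y)`, as a function of
`(a₁, a₂, x, y)`. It parametrizes the singular Weierstrass equations; `a₃`, `a₄`, `a₆` are obtained
by solving, in this order, the `y`-derivative, the `x`-derivative and the equation itself. -/
def singularCurve : R × R × R × R → WeierstrassCurve R
  | (a₁, a₂, x, y) =>
    { a₁ := a₁
      a₂ := a₂
      a₃ := -2 * y - a₁ * x
      a₄ := a₁ * y - 3 * x ^ 2 - 2 * a₂ * x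
      a₆ := 2 * x ^ 3 + a₂ * x ^ 2 - a₁ * x * y - y ^ 2 }

variable {W : WeierstrassCurve R} {x y x' y' : R}

theorem isSingularPoint_iff :
    IsSingularPoint W x y ↔ 2 * y + W.a₁ * x + W.a₃ = 0 ∧
      W.a₁ * y = 3 * x ^ 2 + 2 * W.a₂ * x + W.a₄ ∧
      y ^ 2 + W.a₁ * x * y + W.a₃ * y = x ^ 3 + W.a₂ * x ^ 2 + W.a₄ * x + W.a₆ := by
  rw [IsSingularPoint, WeierstrassCurve.Affine.nonsingular_iff',
    WeierstrassCurve.Affine.equation_iff, sub_ne_zero]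
  tauto

theorem isSingularPoint_iff_of_char_two [CharP R 2] :
    IsSingularPoint W x y ↔ W.a₁ * x = W.a₃ ∧ W.a₁ * y = x ^ 2 + W.a₄ ∧
      y ^ 2 = x ^ 3 + W.a₂ * x ^ 2 + W.a₄ * x + W.a₆ := by
  have h2 : (2 : R) = 0 := CharTwo.two_eq_zero
  rw [isSingularPoint_iff]
  constructor
  · rintro ⟨hY, hX, hE⟩
    refine ⟨?_, ?_, ?_⟩
    · linear_combination hY - (y + W.a₃) * h2
    · linear_combination hX + (x ^ 2 + W.a₂ * x) * h2
    · linear_combination hE - y * hY + y ^ 2 * h2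
  · rintro ⟨hY, hX, hE⟩
    refine ⟨?_, ?_, ?_⟩
    · linear_combination hY + (y + W.a₃) * h2
    · linear_combination hX - (x ^ 2 + W.a₂ * x) * h2
    · linear_combination hE + y * hY + W.a₃ * y * h2

theorem isSingularPoint_iff_eq_singularCurve :
    IsSingularPoint W x y ↔ W = singularCurve (W.a₁, W.a₂, x, y) := by
  simp only [isSingularPoint_iff, WeierstrassCurve.ext_iff, singularCurve, true_and]
  constructor
  · rintro ⟨hY, hX, hE⟩
    refine ⟨?_, ?_, ?_⟩
    · linear_combination hY
    · linear_combination -hX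
    · linear_combination y * hY + x * hX - hE
  · rintro ⟨h₃, h₄, h₆⟩
    refine ⟨?_, ?_, ?_⟩
    · linear_combination h₃
    · linear_combination -h₄
    · linear_combination y * h₃ - x * h₄ - h₆

theorem isSingularPoint_singularCurve (a₁ a₂ x y : R) :
    IsSingularPoint (singularCurve (a₁, a₂, x, y)) x y :=
  isSingularPoint_iff_eq_singularCurve.mpr rfl

theorem IsSingularPoint.Δ_eq_zero (h : IsSingularPoint W x y) : W.Δ = 0 := by
  by_contra hΔ
  exact h.2 ((WeierstrassCurve.Affine.equation_iff_nonsingular_of_Δ_ne_zero hΔ).mp h.1)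

-- Expand the equation around one of the two points: by Euler's identity for homogeneous
-- polynomials, combining it with its derivatives cancels the quadratic terms and leaves the cubic.
theorem IsSingularPoint.unique [IsReduced R] (h : IsSingularPoint W x y)
    (h' : IsSingularPoint W x' y') : x = x' ∧ y = y' := by
  obtain ⟨hY, hX, hE⟩ := isSingularPoint_iff.mp h
  obtain ⟨hY', hX', hE'⟩ := isSingularPoint_iff.mp h'
  have hY₀ : 2 * (y - y') + W.a₁ * (x - x') = 0 := by linear_combination hY - hY'
  have hX₀ : W.a₁ * (y - y') = 3 * (x - x') ^ 2 + 2 * (W.a₂ + 3 * x') * (x - x') := by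
    linear_combination hX - hX'
  have hE₀ : (y - y') ^ 2 + W.a₁ * (x - x') * (y - y') =
      (x - x') ^ 3 + (W.a₂ + 3 * x') * (x - x') ^ 2 := by
    linear_combination hE - hE' - (y - y') * hY' - (x - x') * hX'
  have hx : x = x' := by
    have hcube : (x - x') ^ 3 = 0 := by
      linear_combination 2 * hE₀ - (y - y') * hY₀ - (x - x') * hX₀
    exact sub_eq_zero.mp (pow_eq_zero_iff three_ne_zero |>.mp hcube)
  subst hx
  have hsq : (y - y') ^ 2 = 0 := by linear_combination hE₀
  exact ⟨rfl, sub_eq_zero.mp (pow_eq_zero_iff two_ne_zero |>.mp hsq)⟩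

theorem injective_singularCurve [IsReduced R] :
    Function.Injective (singularCurve : R × R × R × R → WeierstrassCurve R) := by
  rintro ⟨a₁, a₂, x, y⟩ ⟨a₁', a₂', x', y'⟩ h
  have ha₁ : a₁ = a₁' := congrArg WeierstrassCurve.a₁ h
  have ha₂ : a₂ = a₂' := congrArg WeierstrassCurve.a₂ h
  have hxy := isSingularPoint_singularCurve a₁ a₂ x y
  rw [h] at hxy
  obtain ⟨hx, hy⟩ := hxy.unique (isSingularPoint_singularCurve a₁' a₂' x' y')
  rw [ha₁, ha₂, hx, hy]

end SingularPoint

section Existence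

open Polynomial

variable {F : Type*} [Field F] {W : WeierstrassCurve F}

-- Completing the square turns the equation into `(2y + a₁x + a₃)² = 4x³ + b₂x² + 2b₄x + b₆`.
theorem isSingularPoint_of_isRoot_twoTorsionPolynomial (h2 : (2 : F) ≠ 0) {x : F}
    (hroot : W.twoTorsionPolynomial.toPoly.IsRoot x)
    (hroot' : (derivative W.twoTorsionPolynomial.toPoly).IsRoot x) :
    IsSingularPoint W x (-(W.a₁ * x + W.a₃) / 2) := by
  have hcubic : 4 * x ^ 3 + W.b₂ * x ^ 2 + 2 * W.b₄ * x + W.b₆ = 0 := by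
    simpa [WeierstrassCurve.twoTorsionPolynomial, Cubic.toPoly] using hroot
  have hquadratic : 6 * x ^ 2 + W.b₂ * x + W.b₄ = 0 := by
    have hderiv : 4 * (3 * x ^ 2) + W.b₂ * (2 * x) + 2 * W.b₄ = 0 := by
      simpa [WeierstrassCurve.twoTorsionPolynomial, Cubic.toPoly, one_add_one_eq_two,
        two_add_one_eq_three] using hroot'
    refine (mul_eq_zero_iff_left h2).mp ?_
    linear_combination hderiv
  rw [WeierstrassCurve.b₂, WeierstrassCurve.b₄] at hcubic hquadratic
  rw [WeierstrassCurve.b₆] at hcubic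
  refine isSingularPoint_iff.mpr ⟨?_, ?_, ?_⟩
  · field_simp
    ring
  · field_simp
    linear_combination -hquadratic
  · field_simp
    linear_combination -hcubic

theorem exists_isSingularPoint_of_two_ne_zero [PerfectField F] (h2 : (2 : F) ≠ 0) (hΔ : W.Δ = 0) :
    ∃ x y, IsSingularPoint W x y := by
  have ha : W.twoTorsionPolynomial.a ≠ 0 := by
    rw [WeierstrassCurve.twoTorsionPolynomial, show (4 : F) = 2 ^ 2 by norm_num]
    exact pow_ne_zero 2 h2
  have hsep : ¬ W.twoTorsionPolynomial.toPoly.Separable := by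
    simp [separable_toPoly_iff_discr_ne_zero ha, WeierstrassCurve.twoTorsionPolynomial_discr, hΔ]
  obtain ⟨x, hx, hx'⟩ := exists_isRoot_and_isRoot_derivative_of_not_separable
    (Cubic.natDegree_of_a_ne_zero ha).le hsep
  exact ⟨x, _, isSingularPoint_of_isRoot_twoTorsionPolynomial h2 hx hx'⟩

theorem exists_isSingularPoint_of_char_two [PerfectField F] [CharP F 2] (hΔ : W.Δ = 0) :
    ∃ x y, IsSingularPoint W x y := by
  have h2 : (2 : F) = 0 := CharTwo.two_eq_zero
  rw [W.Δ_of_char_two, W.b₈_of_char_two] at hΔ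
  simp only [isSingularPoint_iff_of_char_two]
  rcases eq_or_ne W.a₁ 0 with ha₁ | ha₁
  · have ha₃ : W.a₃ = 0 := by simpa [ha₁] using hΔ
    obtain ⟨x, hx⟩ := surjective_frobenius F 2 W.a₄
    obtain ⟨y, hy⟩ := surjective_frobenius F 2 (x ^ 3 + W.a₂ * x ^ 2 + W.a₄ * x + W.a₆)
    rw [frobenius_def] at hx hy
    exact ⟨x, y, by simp [ha₁, ha₃], by simp [ha₁, hx, CharTwo.add_self_eq_zero], hy⟩
  · -- Both derivative conditions are now linear and determine the point; there the equation
    -- becomes `Δ = 0` after multiplication by `a₁⁶`.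
    refine ⟨W.a₃ / W.a₁, ((W.a₃ / W.a₁) ^ 2 + W.a₄) / W.a₁, ?_, ?_, ?_⟩
    · field_simp
    · field_simp
    · field_simp
      linear_combination hΔ + (W.a₁ ^ 2 * W.a₃ ^ 2 * W.a₄ - W.a₁ ^ 3 * W.a₃ ^ 3
        - W.a₁ ^ 4 * W.a₂ * W.a₃ ^ 2 - W.a₁ ^ 5 * W.a₃ * W.a₄ - W.a₁ ^ 6 * W.a₆) * h2

theorem exists_isSingularPoint_of_Δ_eq_zero [PerfectField F] (hΔ : W.Δ = 0) :
    ∃ x y, IsSingularPoint W x y := by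
  by_cases h2 : (2 : F) = 0
  · have : CharP F 2 := CharTwo.of_one_ne_zero_of_two_eq_zero one_ne_zero h2
    exact exists_isSingularPoint_of_char_two hΔ
  · exact exists_isSingularPoint_of_two_ne_zero h2 hΔ

theorem range_singularCurve [PerfectField F] :
    Set.range (singularCurve : F × F × F × F → WeierstrassCurve F) = {W | W.Δ = 0} := by
  ext W
  constructor
  · rintro ⟨⟨a₁, a₂, x, y⟩, rfl⟩
    exact (isSingularPoint_singularCurve a₁ a₂ x y).Δ_eq_zero
  · intro hΔ
    obtain ⟨x, y, hxy⟩ := exists_isSingularPoint_of_Δ_eq_zero hΔ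
    exact ⟨_, (isSingularPoint_iff_eq_singularCurve.mp hxy).symm⟩

end Existence

section Counting

/-- The identification of a Weierstrass curve with the tuple `(a₁, a₂, a₃, a₄, a₆)` of its
coefficients, used to count curves by counting tuples. -/
def tupleEquivWeierstrassCurve (R : Type*) : R × R × R × R × R ≃ WeierstrassCurve R where
  toFun v := ⟨v.1, v.2.1, v.2.2.1, v.2.2.2.1, v.2.2.2.2⟩
  invFun W := (W.a₁, W.a₂, W.a₃, W.a₄, W.a₆)

theorem card_weierstrassCurve (R : Type*) : Nat.card (WeierstrassCurve R) = Nat.card R ^ 5 := by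
  rw [← Nat.card_congr (tupleEquivWeierstrassCurve R)]
  simp only [Nat.card_prod]
  ring

theorem ncard_Δ_eq_zero (F : Type*) [Field F] [Finite F] :
    {W : WeierstrassCurve F | W.Δ = 0}.ncard = Nat.card F ^ 4 := by
  rw [← range_singularCurve, ← Nat.card_coe_set_eq,
    Nat.card_range_of_injective injective_singularCurve]
  simp only [Nat.card_prod]
  ring

theorem ncard_Δ_ne_zero (F : Type*) [Field F] [Finite F] :
    {W : WeierstrassCurve F | W.Δ ≠ 0}.ncard = Nat.card F ^ 5 - Nat.card F ^ 4 := by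
  have : Finite (WeierstrassCurve F) := .of_equiv _ (tupleEquivWeierstrassCurve F)
  rw [← card_weierstrassCurve, ← ncard_Δ_eq_zero, ← Set.ncard_compl, Set.compl_ofPred]

end Counting

/-- The number of Weierstrass equations `y² + a₁xy + a₃y = x³ + a₂x² + a₄x + a₆` over a
finite field `F` with `q` elements having nonzero discriminant is `q⁵ - q⁴`. -/
theorem card_smooth_weierstrass (F : Type*) [Field F] [Fintype F] [DecidableEq F] :
    (Finset.univ.filter (fun v : F × F × F × F × F =>
        (WeierstrassCurve.mk v.1 v.2.1 v.2.2.1 v.2.2.2.1 v.2.2.2.2).Δ ≠ 0)).card =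
      Fintype.card F ^ 5 - Fintype.card F ^ 4 := by
  rw [← Nat.card_eq_fintype_card, ← ncard_Δ_ne_zero, ← Nat.card_coe_set_eq, ← Fintype.card_subtype,
    ← Nat.card_eq_fintype_card]
  exact Nat.card_congr ((tupleEquivWeierstrassCurve F).subtypeEquiv fun _ => Iff.rfl)
end

section
/- Let F be a finite field of odd cardinality q. For a tuple (a₁, a₂, a₃, a₄, a₆) ∈ F⁵ with nonzero discriminant, let N denote the number of points of the corresponding Weierstrass curve over F, i.e., the number of affine solutions (x,y) ∈ F² of y² + a₁xy + a₃y = x³ + a₂x² + a₄x + a₆ plus one for the point at infinity. Then for every integer t, the number of tuples (a₁, a₂, a₃, a₄, a₆) ∈ F⁵ with nonzero discriminant and q + 1 - N = t equals the number of such tuples with q + 1 - N = -t. -/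
/-!
Pick `D` not of the form `u² - u`, so that `F[T] / (T² - T - D)` is the quadratic extension of `F`;
this works in every characteristic, including `2`. Over each abscissa `x` the curve has as many
points as a quadratic polynomial `T² + mT - c` has roots, and its twist has over `(1 + 4D)x` as many
points as `T² + mT - ((1 + 4D)c + Dm²)` has roots. If the first polynomial has a root `r`,
substituting `T = r + w` turns the second into `w² + (2r + m)w - D(2r + m)²`, which has no root if
`r` is a simple root of the first and exactly one if `r` is a double root, so that the two have two
roots together; since either polynomial has one root on average as `c` varies, this is also true
when the first has none. Summing over `x`, a curve and its twist have `2q + 2` points together, so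
twisting negates the trace of Frobenius. Twisting also multiplies the discriminant by the
nonzero element `(1 + 4D)⁶`, and it permutes the set of equations.
-/

/-- The number of points of the Weierstrass curve
`y² + a₁xy + a₃y = x³ + a₂x² + a₄x + a₆` over the finite field `F`: the number of affine
solutions `(x, y) ∈ F²` plus one for the point at infinity. -/
def weierstrassPointCount (F : Type*) [Field F] [Fintype F] [DecidableEq F]
    (a₁ a₂ a₃ a₄ a₆ : F) : ℕ :=
  (Finset.univ.filter (fun p : F × F =>
      p.2 ^ 2 + a₁ * p.1 * p.2 + a₃ * p.2 =
        p.1 ^ 3 + a₂ * p.1 ^ 2 + a₄ * p.1 + a₆)).card + 1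

lemma exists_forall_sq_sub_self_ne (R : Type*) [Ring R] [Nontrivial R] [Finite R] :
    ∃ D : R, ∀ u : R, u ^ 2 - u ≠ D := by
  have not_injective : ¬Function.Injective fun u : R => u ^ 2 - u := fun h =>
    zero_ne_one (h (by simp : (0 : R) ^ 2 - 0 = 1 ^ 2 - 1))
  simpa [Function.Surjective] using mt Finite.injective_iff_surjective.mpr not_injective

lemma one_add_four_mul_ne_zero {R : Type*} [CommRing R] {D : R} (hD : ∀ u : R, u ^ 2 - u ≠ D) :
    1 + 4 * D ≠ 0 := fun h =>
  hD (-2 * D) (by linear_combination D * h)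

section QuadraticRoots

variable {R : Type*} [CommRing R] [Fintype R] [DecidableEq R] {m c r z D : R}

/-- The roots of the quadratic polynomial `T² + mT - c`. -/
def quadraticRoots (m c : R) : Finset R :=
  Finset.univ.filter fun z => z ^ 2 + m * z = c

lemma mem_quadraticRoots : z ∈ quadraticRoots m c ↔ z ^ 2 + m * z = c := by
  simp [quadraticRoots]

lemma sum_card_quadraticRoots (m : R) : ∑ c, (quadraticRoots m c).card = Fintype.card R :=
  (Finset.card_eq_sum_card_fiberwise fun _ _ => Finset.mem_univ _).symm

lemma card_quadraticRoots_mul {d : R} (hd : IsUnit d) (m c : R) :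
    (quadraticRoots (d * m) (d ^ 2 * c)).card = (quadraticRoots m c).card := by
  symm
  refine Finset.card_bijective (d * ·) (IsUnit.isUnit_iff_mulLeft_bijective.mp hd) fun z => ?_
  have scaled : (d * z) ^ 2 + d * m * (d * z) = d ^ 2 * (z ^ 2 + m * z) := by ring
  rw [mem_quadraticRoots, mem_quadraticRoots, scaled, (hd.pow 2).mul_right_inj]

lemma mem_quadraticRoots_twist_iff (hr : r ∈ quadraticRoots m c) :
    z ∈ quadraticRoots m ((1 + 4 * D) * c + D * m ^ 2) ↔
      (z - r) ^ 2 + (2 * r + m) * (z - r) = D * (2 * r + m) ^ 2 := by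
  obtain rfl := mem_quadraticRoots.mp hr
  rw [mem_quadraticRoots]
  constructor <;> intro h <;> linear_combination h

end QuadraticRoots

section CardQuadraticRoots

variable {F : Type*} [Field F] [Fintype F] [DecidableEq F] {m c r D : F}

lemma quadraticRoots_eq_pair (hr : r ∈ quadraticRoots m c) :
    quadraticRoots m c = {r, -m - r} := by
  ext z
  have vieta : z ^ 2 + m * z - c = (z - r) * (z - (-m - r)) := by
    linear_combination mem_quadraticRoots.mp hr
  rw [mem_quadraticRoots, Finset.mem_insert, Finset.mem_singleton, ← sub_eq_zero, vieta,
    mul_eq_zero, sub_eq_zero, sub_eq_zero]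

lemma card_quadraticRoots_le_two (m c : F) : (quadraticRoots m c).card ≤ 2 := by
  obtain h | ⟨r, hr⟩ := (quadraticRoots m c).eq_empty_or_nonempty
  · simp [h]
  · exact quadraticRoots_eq_pair hr ▸ Finset.card_le_two

lemma card_quadraticRoots_add_card_twist_of_mem (hD : ∀ u : F, u ^ 2 - u ≠ D)
    (hr : r ∈ quadraticRoots m c) :
    (quadraticRoots m c).card + (quadraticRoots m ((1 + 4 * D) * c + D * m ^ 2)).card = 2 := by
  rcases eq_or_ne (2 * r + m) 0 with double | separable
  · have roots : quadraticRoots m c = {r} := by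
      rw [quadraticRoots_eq_pair hr, show -m - r = r by linear_combination -double,
        Finset.pair_eq_singleton]
    have twist_roots : quadraticRoots m ((1 + 4 * D) * c + D * m ^ 2) = {r} := by
      ext z
      simp [mem_quadraticRoots_twist_iff hr, double, sub_eq_zero]
    rw [roots, twist_roots, Finset.card_singleton]
  · have distinct : r ≠ -m - r := fun h => separable (by linear_combination h)
    have twist_roots : quadraticRoots m ((1 + 4 * D) * c + D * m ^ 2) = ∅ := by
      refine Finset.eq_empty_of_forall_notMem fun z hz => ?_
      obtain ⟨u, hu⟩ : ∃ u, (2 * r + m) * u = r - z :=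
        ⟨(r - z) / (2 * r + m), mul_div_cancel₀ _ separable⟩
      refine hD u (mul_left_cancel₀ (pow_ne_zero 2 separable) ?_)
      linear_combination (mem_quadraticRoots_twist_iff hr).mp hz +
        ((2 * r + m) * u + r - z - (2 * r + m)) * hu
    rw [quadraticRoots_eq_pair hr, twist_roots, Finset.card_pair distinct, Finset.card_empty]

-- As `c` varies, either cardinality averages to `1`, so the bound `2` on the sum is attained.
lemma card_quadraticRoots_add_card_twist (hD : ∀ u : F, u ^ 2 - u ≠ D) (m c : F) :
    (quadraticRoots m c).card + (quadraticRoots m ((1 + 4 * D) * c + D * m ^ 2)).card = 2 := by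
  have le_two (c : F) :
      (quadraticRoots m c).card + (quadraticRoots m ((1 + 4 * D) * c + D * m ^ 2)).card ≤ 2 := by
    obtain h | ⟨r, hr⟩ := (quadraticRoots m c).eq_empty_or_nonempty
    · simpa [h] using card_quadraticRoots_le_two _ _
    · exact (card_quadraticRoots_add_card_twist_of_mem hD hr).le
  have sum_twist :
      ∑ c, (quadraticRoots m ((1 + 4 * D) * c + D * m ^ 2)).card = Fintype.card F := by
    rw [← sum_card_quadraticRoots m]
    exact ((Equiv.mulLeft₀ _ (one_add_four_mul_ne_zero hD)).trans
      (Equiv.addRight (D * m ^ 2))).sum_comp fun c => (quadraticRoots m c).card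
  refine (Finset.sum_eq_sum_iff_of_le fun c _ => le_two c).mp ?_ c (Finset.mem_univ c)
  rw [Finset.sum_add_distrib, sum_card_quadraticRoots, sum_twist]
  simp [mul_two]

end CardQuadraticRoots

section QuadraticTwist

/-- Weierstrass curves encoded by their coefficients `(a₁, a₂, a₃, a₄, a₆)`. -/
def weierstrassCurveEquiv (R : Type*) : R × R × R × R × R ≃ WeierstrassCurve R where
  toFun v := ⟨v.1, v.2.1, v.2.2.1, v.2.2.2.1, v.2.2.2.2⟩
  invFun W := (W.a₁, W.a₂, W.a₃, W.a₄, W.a₆)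
  left_inv _ := rfl
  right_inv _ := rfl

/-- The quadratic twist of a Weierstrass curve by the algebra `R[T] / (T² - T - D)`, of
discriminant `1 + 4D`. Parametrising by `D` instead of the discriminant makes the formulas valid in
every characteristic. -/
@[simps]
def quadraticTwist {R : Type*} [CommRing R] (D : R) (W : WeierstrassCurve R) :
    WeierstrassCurve R where
  a₁ := W.a₁
  a₂ := (1 + 4 * D) * W.a₂ + D * W.a₁ ^ 2
  a₃ := (1 + 4 * D) * W.a₃
  a₄ := (1 + 4 * D) ^ 2 * W.a₄ + 2 * D * (1 + 4 * D) * W.a₁ * W.a₃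
  a₆ := (1 + 4 * D) ^ 3 * W.a₆ + D * (1 + 4 * D) ^ 2 * W.a₃ ^ 2

lemma quadraticTwist_Δ {R : Type*} [CommRing R] (D : R) (W : WeierstrassCurve R) :
    (quadraticTwist D W).Δ = (1 + 4 * D) ^ 6 * W.Δ := by
  simp only [WeierstrassCurve.Δ, WeierstrassCurve.b₂, WeierstrassCurve.b₄, WeierstrassCurve.b₆,
    WeierstrassCurve.b₈, quadraticTwist]
  ring

lemma quadraticTwist_injective {R : Type*} [CommRing R] {D : R} (hd : IsLeftRegular (1 + 4 * D)) :
    Function.Injective (quadraticTwist D) := by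
  intro V W h
  obtain ⟨h₁, h₂, h₃, h₄, h₆⟩ := WeierstrassCurve.mk.inj h
  have h₃ := hd h₃
  rw [h₁] at h₂ h₄
  rw [h₃] at h₄ h₆
  exact WeierstrassCurve.ext h₁ (hd (add_right_cancel h₂)) h₃
    (hd.pow 2 (add_right_cancel h₄)) (hd.pow 3 (add_right_cancel h₆))

variable {F : Type*} [Field F] [Fintype F] [DecidableEq F]

/-- The number of affine points of `W` with abscissa `x`. -/
def fiberCard (W : WeierstrassCurve F) (x : F) : ℕ :=
  (quadraticRoots (W.a₁ * x + W.a₃) (x ^ 3 + W.a₂ * x ^ 2 + W.a₄ * x + W.a₆)).card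

/-- The trace of Frobenius `q + 1 - N`. -/
def frobeniusTrace (W : WeierstrassCurve F) : ℤ :=
  (Fintype.card F : ℤ) + 1 - weierstrassPointCount F W.a₁ W.a₂ W.a₃ W.a₄ W.a₆

lemma weierstrassPointCount_eq_sum_fiberCard (W : WeierstrassCurve F) :
    weierstrassPointCount F W.a₁ W.a₂ W.a₃ W.a₄ W.a₆ = ∑ x, fiberCard W x + 1 := by
  simp only [weierstrassPointCount, fiberCard, quadraticRoots, Finset.card_filter,
    Fintype.sum_prod_type, add_mul, ← add_assoc]

variable {D : F}

lemma fiberCard_add_fiberCard_quadraticTwist (hD : ∀ u : F, u ^ 2 - u ≠ D)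
    (W : WeierstrassCurve F) (x : F) :
    fiberCard W x + fiberCard (quadraticTwist D W) ((1 + 4 * D) * x) = 2 := by
  set m := W.a₁ * x + W.a₃ with hm
  set c := x ^ 3 + W.a₂ * x ^ 2 + W.a₄ * x + W.a₆ with hc
  have linear_coeff :
      W.a₁ * ((1 + 4 * D) * x) + (1 + 4 * D) * W.a₃ = (1 + 4 * D) * m := by
    rw [hm]
    ring
  have cubic_value :
      ((1 + 4 * D) * x) ^ 3 + (quadraticTwist D W).a₂ * ((1 + 4 * D) * x) ^ 2 +
          (quadraticTwist D W).a₄ * ((1 + 4 * D) * x) + (quadraticTwist D W).a₆ =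
        (1 + 4 * D) ^ 2 * ((1 + 4 * D) * c + D * m ^ 2) := by
    simp only [quadraticTwist_a₂, quadraticTwist_a₄, quadraticTwist_a₆, hm, hc]
    ring
  rw [fiberCard, fiberCard, cubic_value, quadraticTwist_a₁, quadraticTwist_a₃, linear_coeff,
    card_quadraticRoots_mul (one_add_four_mul_ne_zero hD).isUnit, ← hm, ← hc,
    card_quadraticRoots_add_card_twist hD]

lemma frobeniusTrace_quadraticTwist (hD : ∀ u : F, u ^ 2 - u ≠ D) (W : WeierstrassCurve F) :
    frobeniusTrace (quadraticTwist D W) = -frobeniusTrace W := by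
  have sum_fiberCard :
      ∑ x, fiberCard W x + ∑ x, fiberCard (quadraticTwist D W) x = Fintype.card F * 2 := by
    rw [← Equiv.sum_comp (Equiv.mulLeft₀ _ (one_add_four_mul_ne_zero hD))
        (fiberCard (quadraticTwist D W)), ← Finset.sum_add_distrib]
    simp [fiberCard_add_fiberCard_quadraticTwist hD]
  simp only [frobeniusTrace, weierstrassPointCount_eq_sum_fiberCard]
  lia

end QuadraticTwist

theorem weierstrass_trace_symmetry_general (F : Type*) [Field F] [Fintype F] [DecidableEq F]
    (t : ℤ) :
    (Finset.univ.filter (fun v : F × F × F × F × F =>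
        (WeierstrassCurve.mk v.1 v.2.1 v.2.2.1 v.2.2.2.1 v.2.2.2.2).Δ ≠ 0 ∧
          (Fintype.card F : ℤ) + 1 -
            weierstrassPointCount F v.1 v.2.1 v.2.2.1 v.2.2.2.1 v.2.2.2.2 = t)).card =
    (Finset.univ.filter (fun v : F × F × F × F × F =>
        (WeierstrassCurve.mk v.1 v.2.1 v.2.2.1 v.2.2.2.1 v.2.2.2.2).Δ ≠ 0 ∧
          (Fintype.card F : ℤ) + 1 -
            weierstrassPointCount F v.1 v.2.1 v.2.2.1 v.2.2.2.1 v.2.2.2.2 = -t)).card := by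
  obtain ⟨D, hD⟩ := exists_forall_sq_sub_self_ne F
  have hd : 1 + 4 * D ≠ 0 := one_add_four_mul_ne_zero hD
  let e := weierstrassCurveEquiv F
  have twist_injective : Function.Injective (e.symm ∘ quadraticTwist D ∘ e) :=
    e.symm.injective.comp ((quadraticTwist_injective (mul_right_injective₀ hd)).comp e.injective)
  refine Finset.card_bijective _ (Finite.injective_iff_bijective.mp twist_injective) fun v => ?_
  have Δ_ne_zero : (quadraticTwist D (e v)).Δ ≠ 0 ↔ (e v).Δ ≠ 0 := by
    simp [quadraticTwist_Δ, hd]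
  have trace_eq : frobeniusTrace (quadraticTwist D (e v)) = -t ↔ frobeniusTrace (e v) = t := by
    rw [frobeniusTrace_quadraticTwist hD, neg_inj]
  rw [Finset.mem_filter_univ, Finset.mem_filter_univ]
  exact (and_congr Δ_ne_zero trace_eq).symm

/-- Over a finite field of odd cardinality `q`, for each `t ∈ ℤ` the number of Weierstrass
equations with nonzero discriminant and trace of Frobenius `q + 1 - N = t` equals the
number of those with trace `-t`. -/
theorem weierstrass_trace_symmetry (F : Type*) [Field F] [Fintype F] [DecidableEq F]
    (hq : Odd (Fintype.card F)) (t : ℤ) :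
    (Finset.univ.filter (fun v : F × F × F × F × F =>
        (WeierstrassCurve.mk v.1 v.2.1 v.2.2.1 v.2.2.2.1 v.2.2.2.2).Δ ≠ 0 ∧
          (Fintype.card F : ℤ) + 1 -
            weierstrassPointCount F v.1 v.2.1 v.2.2.1 v.2.2.2.1 v.2.2.2.2 = t)).card =
    (Finset.univ.filter (fun v : F × F × F × F × F =>
        (WeierstrassCurve.mk v.1 v.2.1 v.2.2.1 v.2.2.2.1 v.2.2.2.2).Δ ≠ 0 ∧
          (Fintype.card F : ℤ) + 1 -
            weierstrassPointCount F v.1 v.2.1 v.2.2.1 v.2.2.2.1 v.2.2.2.2 = -t)).card :=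
  weierstrass_trace_symmetry_general F t
end
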